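/- Let X be an n×p real matrix, let s ≥ 7 be an integer and C > 1, κ ≥ 9 real numbers with m := ⌈Cs²⌉ ≤ p, and define C̄ by (2 + 4C̄)s + 1 = Cs². Assume the sparse eigenvalue assumption φ_max(m) / φ_min(m)^{3/2} < √C / κ with φ_min(m) > 0. Let α ∈ (0,1] satisfy α² ≥ ν φ_min(m) / (Cs²) for some ν > 0, let w ∈ [α,1]^p, and let X^w be the matrix with columns X^w_k = w_k X_k. Then φ^w_max(m) / φ^w_min(m) ≤ 7C̄ / (κ√ν), where φ^w denote the sparse eigenvalues of X^w. -/

import Mathlib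

/-!
Reweighting the columns replaces `X v` by `X (w * v)`. The vector `w * v` is at least as sparse as
`v`, and its norm lies between `α ‖v‖` and `‖v‖`, so `φ^w_max ≤ φ_max` and `φ^w_min ≥ α φ_min`.
Dividing, `φ^w_max / φ^w_min ≤ α⁻¹ φ_max / φ_min`. The lower bound on `α` reads
`α⁻¹ ≤ √C s / √(ν φ_min)` and the eigenvalue assumption gives `φ_max / φ_min ≤ √C √φ_min / κ`;
in the product `φ_min` cancels, leaving `C s / (κ √ν)`. Finally `C s ≤ 7 C̄`, because
`4 C̄ = C s - 2 - 1 / s` and `C s ≥ 7`.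
-/

open Finset

/-- The Euclidean norm of a vector in `ℝ^k`. -/
noncomputable def euclNorm {k : ℕ} (v : Fin k → ℝ) : ℝ :=
  Real.sqrt (∑ i, v i ^ 2)

/-- The number of nonzero entries of a vector. -/
noncomputable def l0norm {p : ℕ} (v : Fin p → ℝ) : ℕ :=
  (Finset.univ.filter fun k => v k ≠ 0).card

/-- Minimal sparse eigenvalue `φ_min(m)` of an `n × p` matrix `X`. -/
noncomputable def phiMin {n p : ℕ} (X : Matrix (Fin n) (Fin p) ℝ) (m : ℕ) : ℝ :=
  sInf {r : ℝ | ∃ v : Fin p → ℝ, v ≠ 0 ∧ l0norm v ≤ m ∧ r = euclNorm (X.mulVec v) / euclNorm v}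

/-- Maximal sparse eigenvalue `φ_max(m)` of an `n × p` matrix `X`. -/
noncomputable def phiMax {n p : ℕ} (X : Matrix (Fin n) (Fin p) ℝ) (m : ℕ) : ℝ :=
  sSup {r : ℝ | ∃ v : Fin p → ℝ, v ≠ 0 ∧ l0norm v ≤ m ∧ r = euclNorm (X.mulVec v) / euclNorm v}

section EuclNorm

variable {k : ℕ}

lemma euclNorm_eq_norm_toLp (v : Fin k → ℝ) : euclNorm v = ‖WithLp.toLp 2 v‖ := by
  simp [euclNorm, EuclideanSpace.norm_eq]

lemma euclNorm_nonneg (v : Fin k → ℝ) : 0 ≤ euclNorm v := Real.sqrt_nonneg _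

lemma euclNorm_zero : euclNorm (0 : Fin k → ℝ) = 0 := by
  simp [euclNorm_eq_norm_toLp]

lemma euclNorm_pos {v : Fin k → ℝ} (hv : v ≠ 0) : 0 < euclNorm v := by
  simpa [euclNorm_eq_norm_toLp] using hv

lemma euclNorm_smul (c : ℝ) (v : Fin k → ℝ) : euclNorm (c • v) = |c| * euclNorm v := by
  simp [euclNorm_eq_norm_toLp, norm_smul]

lemma euclNorm_le_euclNorm {u v : Fin k → ℝ} (h : ∀ i, |u i| ≤ |v i|) :
    euclNorm u ≤ euclNorm v :=
  Real.sqrt_le_sqrt (sum_le_sum fun i _ => sq_le_sq.mpr (h i))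

lemma euclNorm_mul_le {w : Fin k → ℝ} {β : ℝ} (hβ : 0 ≤ β) (hw : ∀ i, |w i| ≤ β)
    (v : Fin k → ℝ) : euclNorm (w * v) ≤ β * euclNorm v := by
  rw [← abs_of_nonneg hβ, ← euclNorm_smul]
  refine euclNorm_le_euclNorm fun i => ?_
  simpa [abs_mul, abs_of_nonneg hβ] using mul_le_mul_of_nonneg_right (hw i) (abs_nonneg (v i))

lemma le_euclNorm_mul {w : Fin k → ℝ} {α : ℝ} (hα : 0 ≤ α) (hw : ∀ i, α ≤ |w i|)
    (v : Fin k → ℝ) : α * euclNorm v ≤ euclNorm (w * v) := by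
  rw [← abs_of_nonneg hα, ← euclNorm_smul]
  refine euclNorm_le_euclNorm fun i => ?_
  simpa [abs_mul, abs_of_nonneg hα] using mul_le_mul_of_nonneg_right (hw i) (abs_nonneg (v i))

open scoped Matrix.Norms.L2Operator in
lemma euclNorm_mulVec_le {l : ℕ} (X : Matrix (Fin l) (Fin k) ℝ) (v : Fin k → ℝ) :
    euclNorm (X.mulVec v) ≤ ‖X‖ * euclNorm v := by
  simpa [euclNorm_eq_norm_toLp] using X.l2_opNorm_mulVec (WithLp.toLp 2 v)

lemma l0norm_mul_le (w v : Fin k → ℝ) : l0norm (w * v) ≤ l0norm v :=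
  card_le_card (monotone_filter_right _ fun _ _ => right_ne_zero_of_mul)

end EuclNorm

section SparseEigenvalues

open Matrix

variable {n p m : ℕ} {X : Matrix (Fin n) (Fin p) ℝ} {v : Fin p → ℝ} {c : ℝ}

lemma phiMax_nonneg (X : Matrix (Fin n) (Fin p) ℝ) (m : ℕ) : 0 ≤ phiMax X m := by
  apply Real.sSup_nonneg
  rintro _ ⟨v, -, -, rfl⟩
  exact div_nonneg (euclNorm_nonneg _) (euclNorm_nonneg _)

lemma phiMin_nonneg (X : Matrix (Fin n) (Fin p) ℝ) (m : ℕ) : 0 ≤ phiMin X m := by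
  apply Real.sInf_nonneg
  rintro _ ⟨v, -, -, rfl⟩
  exact div_nonneg (euclNorm_nonneg _) (euclNorm_nonneg _)

open scoped Matrix.Norms.L2Operator in
lemma euclNorm_mulVec_le_phiMax_mul (X : Matrix (Fin n) (Fin p) ℝ) (hvm : l0norm v ≤ m) :
    euclNorm (X *ᵥ v) ≤ phiMax X m * euclNorm v := by
  obtain rfl | hv := eq_or_ne v 0
  · simp [euclNorm_zero]
  rw [← div_le_iff₀ (euclNorm_pos hv)]
  refine le_csSup ⟨‖X‖, ?_⟩ ⟨v, hv, hvm, rfl⟩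
  rintro _ ⟨u, hu, -, rfl⟩
  exact (div_le_iff₀ (euclNorm_pos hu)).mpr (euclNorm_mulVec_le X u)

lemma phiMin_mul_le_euclNorm_mulVec (X : Matrix (Fin n) (Fin p) ℝ) (hvm : l0norm v ≤ m) :
    phiMin X m * euclNorm v ≤ euclNorm (X *ᵥ v) := by
  obtain rfl | hv := eq_or_ne v 0
  · simp [euclNorm_zero]
  rw [← le_div_iff₀ (euclNorm_pos hv)]
  refine csInf_le ⟨0, ?_⟩ ⟨v, hv, hvm, rfl⟩
  rintro _ ⟨u, -, -, rfl⟩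
  exact div_nonneg (euclNorm_nonneg _) (euclNorm_nonneg _)

lemma phiMax_le (hc : 0 ≤ c)
    (h : ∀ v, l0norm v ≤ m → euclNorm (X *ᵥ v) ≤ c * euclNorm v) : phiMax X m ≤ c := by
  refine Real.sSup_le ?_ hc
  rintro _ ⟨v, hv, hvm, rfl⟩
  exact (div_le_iff₀ (euclNorm_pos hv)).mpr (h v hvm)

lemma le_phiMin (hne : ∃ v : Fin p → ℝ, v ≠ 0 ∧ l0norm v ≤ m)
    (h : ∀ v, l0norm v ≤ m → c * euclNorm v ≤ euclNorm (X *ᵥ v)) : c ≤ phiMin X m := by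
  obtain ⟨u, hu, hum⟩ := hne
  refine le_csInf ⟨_, u, hu, hum, rfl⟩ ?_
  rintro _ ⟨v, hv, hvm, rfl⟩
  exact (le_div_iff₀ (euclNorm_pos hv)).mpr (h v hvm)

-- The infimum is then over the empty set, where `sInf` takes the value `0`.
lemma phiMin_eq_zero_of_not_exists (X : Matrix (Fin n) (Fin p) ℝ)
    (h : ¬∃ v : Fin p → ℝ, v ≠ 0 ∧ l0norm v ≤ m) : phiMin X m = 0 := by
  have hempty : {r : ℝ | ∃ v : Fin p → ℝ, v ≠ 0 ∧ l0norm v ≤ m ∧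
      r = euclNorm (X *ᵥ v) / euclNorm v} = ∅ :=
    Set.eq_empty_of_forall_notMem fun _ ⟨v, hv, hvm, _⟩ => h ⟨v, hv, hvm⟩
  rw [phiMin, hempty, Real.sInf_empty]

end SparseEigenvalues

section Reweighting

open Matrix

variable {n p : ℕ} (X : Matrix (Fin n) (Fin p) ℝ) (m : ℕ) {w : Fin p → ℝ} {α β : ℝ}

lemma mul_diagonal_mulVec (w v : Fin p → ℝ) : (X * diagonal w) *ᵥ v = X *ᵥ (w * v) := by
  rw [← mulVec_mulVec]
  congr 1
  ext i
  exact mulVec_diagonal w v i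

lemma phiMax_mul_diagonal_le (hβ : 0 ≤ β) (hw : ∀ k, |w k| ≤ β) :
    phiMax (X * diagonal w) m ≤ β * phiMax X m := by
  refine phiMax_le (mul_nonneg hβ (phiMax_nonneg X m)) fun v hvm => ?_
  calc euclNorm ((X * diagonal w) *ᵥ v)
      = euclNorm (X *ᵥ (w * v)) := by rw [mul_diagonal_mulVec]
    _ ≤ phiMax X m * euclNorm (w * v) :=
        euclNorm_mulVec_le_phiMax_mul X ((l0norm_mul_le w v).trans hvm)
    _ ≤ phiMax X m * (β * euclNorm v) :=
        mul_le_mul_of_nonneg_left (euclNorm_mul_le hβ hw v) (phiMax_nonneg X m)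
    _ = β * phiMax X m * euclNorm v := by ring

lemma mul_phiMin_le_phiMin_mul_diagonal (hα : 0 ≤ α) (hw : ∀ k, α ≤ |w k|) :
    α * phiMin X m ≤ phiMin (X * diagonal w) m := by
  by_cases hne : ∃ v : Fin p → ℝ, v ≠ 0 ∧ l0norm v ≤ m
  · refine le_phiMin hne fun v hvm => ?_
    calc α * phiMin X m * euclNorm v
        = phiMin X m * (α * euclNorm v) := by ring
      _ ≤ phiMin X m * euclNorm (w * v) :=
          mul_le_mul_of_nonneg_left (le_euclNorm_mul hα hw v) (phiMin_nonneg X m)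
      _ ≤ euclNorm (X *ᵥ (w * v)) :=
          phiMin_mul_le_euclNorm_mulVec X ((l0norm_mul_le w v).trans hvm)
      _ = euclNorm ((X * diagonal w) *ᵥ v) := by rw [mul_diagonal_mulVec]
  · simp [phiMin_eq_zero_of_not_exists _ hne]

variable {m} in
lemma phiMax_div_phiMin_mul_diagonal_le (hφ : 0 < phiMin X m) (hα : 0 < α) (hβ : 0 ≤ β)
    (hw : ∀ k, |w k| ∈ Set.Icc α β) :
    phiMax (X * diagonal w) m / phiMin (X * diagonal w) m ≤
      β / α * (phiMax X m / phiMin X m) := by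
  rw [div_mul_div_comm]
  exact div_le_div₀ (mul_nonneg hβ (phiMax_nonneg X m))
    (phiMax_mul_diagonal_le X m hβ fun k => (hw k).2) (mul_pos hα hφ)
    (mul_phiMin_le_phiMin_mul_diagonal X m hα.le fun k => (hw k).1)

end Reweighting

section Constants

variable {a b s C Cbar ν α : ℝ}

lemma div_le_mul_sqrt_of_div_rpow_le {M : ℝ} (ha : 0 < a) (h : M / a ^ ((3 : ℝ) / 2) ≤ b) :
    M / a ≤ b * √a := by
  have hpow : a ^ ((3 : ℝ) / 2) = √a * a := by
    rw [Real.sqrt_eq_rpow, ← Real.rpow_add_one ha.ne']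
    norm_num
  rw [hpow, div_le_iff₀ (by positivity)] at h
  rwa [div_le_iff₀ ha, mul_assoc]

lemma inv_le_of_div_le_sq (ha : 0 < a) (hs : 0 < s) (hC : 0 < C) (hν : 0 < ν) (hα : 0 < α)
    (h : ν * a / (C * s ^ 2) ≤ α ^ 2) : α⁻¹ ≤ √C * s / (√ν * √a) := by
  have hroot : √ν * √a / (√C * s) ≤ α := by
    have := Real.sqrt_le_iff.mpr ⟨hα.le, h⟩
    rwa [Real.sqrt_div (by positivity), Real.sqrt_mul hν.le, Real.sqrt_mul hC.le,
      Real.sqrt_sq hs.le] at this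
  simpa using inv_anti₀ (by positivity) hroot

lemma mul_le_seven_mul (hs : 1 ≤ s) (hCs : 7 ≤ C * s)
    (hCbar : (2 + 4 * Cbar) * s + 1 = C * s ^ 2) : C * s ≤ 7 * Cbar := by
  have hmul : 7 * s ≤ C * s * s := mul_le_mul_of_nonneg_right hCs (by positivity)
  have : C * s * s ≤ 7 * Cbar * s := by linarith
  exact le_of_mul_le_mul_right this (by positivity)

end Constants

theorem sparse_eigenvalue_ratio_of_randomised_design_general
    {n p m : ℕ} (X : Matrix (Fin n) (Fin p) ℝ) {s C κ Cbar ν α : ℝ}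
    (hs : 1 ≤ s) (hCs : 7 ≤ C * s) (hκ : 0 < κ)
    (hCbar : (2 + 4 * Cbar) * s + 1 = C * s ^ 2)
    (hphipos : 0 < phiMin X m)
    (hassum : phiMax X m / phiMin X m ^ ((3 : ℝ) / 2) ≤ √C / κ)
    (hν : 0 < ν) (hα0 : 0 < α) (hα : ν * phiMin X m / (C * s ^ 2) ≤ α ^ 2)
    {w : Fin p → ℝ} (hw : ∀ k, |w k| ∈ Set.Icc α 1) :
    phiMax (X * Matrix.diagonal w) m / phiMin (X * Matrix.diagonal w) m ≤
      7 * Cbar / (κ * √ν) := by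
  have hs0 : 0 < s := by linarith
  have hC : 0 < C := pos_of_mul_pos_left (by linarith) hs0.le
  calc phiMax (X * Matrix.diagonal w) m / phiMin (X * Matrix.diagonal w) m
      ≤ α⁻¹ * (phiMax X m / phiMin X m) := by
        simpa using phiMax_div_phiMin_mul_diagonal_le X hphipos hα0 zero_le_one hw
    _ ≤ √C * s / (√ν * √(phiMin X m)) * (√C / κ * √(phiMin X m)) :=
        mul_le_mul (inv_le_of_div_le_sq hphipos hs0 hC hν hα0 hα)
          (div_le_mul_sqrt_of_div_rpow_le hphipos hassum)
          (div_nonneg (phiMax_nonneg X m) hphipos.le) (by positivity)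
    _ = √C * √C * s / (κ * √ν) := by field_simp
    _ = C * s / (κ * √ν) := by rw [Real.mul_self_sqrt hC.le]
    _ ≤ 7 * Cbar / (κ * √ν) :=
        div_le_div_of_nonneg_right (mul_le_seven_mul hs hCs hCbar) (by positivity)

/-- Lemma 3: under the sparse eigenvalue assumption, for any weights `w ∈ [α,1]^p` with
`α² ≥ ν φ_min(Cs²)/(Cs²)`, the condition number of the reweighted design on sparse sets of
size `⌈Cs²⌉` is bounded by `7C̄/(κ√ν)`. -/
theorem sparse_eigenvalue_ratio_of_randomised_design
    {n p : ℕ} (X : Matrix (Fin n) (Fin p) ℝ)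
    (s : ℕ) (hs : 7 ≤ s) (C κ : ℝ) (hC : 1 < C) (hκ : 9 ≤ κ)
    (m : ℕ) (hm : m = ⌈C * (s : ℝ) ^ 2⌉₊) (hmp : m ≤ p)
    (Cbar : ℝ) (hCbar : (2 + 4 * Cbar) * (s : ℝ) + 1 = C * (s : ℝ) ^ 2)
    (hphipos : 0 < phiMin X m)
    (hassum : phiMax X m / phiMin X m ^ ((3 : ℝ) / 2) < Real.sqrt C / κ)
    (ν : ℝ) (hν : 0 < ν)
    (α : ℝ) (hα0 : 0 < α) (hα1 : α ≤ 1)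
    (hα : ν * phiMin X m / (C * (s : ℝ) ^ 2) ≤ α ^ 2)
    (w : Fin p → ℝ) (hw : ∀ k, α ≤ w k ∧ w k ≤ 1)
    (Xw : Matrix (Fin n) (Fin p) ℝ) (hXw : ∀ i k, Xw i k = w k * X i k) :
    phiMax Xw m / phiMin Xw m ≤ 7 * Cbar / (κ * Real.sqrt ν) := by
  have hs' : (7 : ℝ) ≤ s := by exact_mod_cast hs
  obtain rfl : Xw = X * Matrix.diagonal w := by ext i k; simp [hXw, mul_comm]
  exact sparse_eigenvalue_ratio_of_randomised_design_general X (by linarith)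
    (hs'.trans (le_mul_of_one_le_left (by positivity) hC.le)) (by linarith) hCbar hphipos
    hassum.le hν hα0 hα
    fun k => by rw [abs_of_nonneg (hα0.le.trans (hw k).1)]; exact hw k
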